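/- Theorem 1 (existence of the adjacency surface pressure): fix d ≥ 1 and x > 0, and for L ∈ ℕ let T_L = P_{Λ_{2L}} − 2^d P_{Λ_L} be the difference between the quenched pressure of the cube Λ_{2L} of side 2L (free boundary conditions) and the sum of the quenched pressures of the 2^d disjoint sub-cubes of side L composing it (which equals 2^d P_{Λ_L} since the sub-cube pressures coincide). Then the sequence T_L / L^{d−1} converges to a finite limit as L → ∞. -/

import Mathlib

open MeasureTheory ProbabilityTheory Filter

noncomputable section

/-- The real value ±1 of a Boolean spin. -/
def spin (s : Bool) : ℝ := if s then 1 else -1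

/-- The quenched pressure `[ln Z]` on the Nishimori line of the Gaussian Edwards–Anderson
model with site set `V`, bond set `E` (a finite set of ordered pairs of sites), and all
parameters equal to `x`: the couplings `j_e`, `e ∈ E`, are independent Gaussians of mean `x`
and variance 1, and `Z(j) = Σ_S exp (Σ_{e∈E} x j_e S_{e.1} S_{e.2})`. -/
def EApressure {V : Type*} [Fintype V] [DecidableEq V] (E : Finset (V × V)) (x : ℝ) : ℝ :=
  ∫ j : {e // e ∈ E} → ℝ,
    Real.log (∑ S : V → Bool,
      Real.exp (∑ e : {e // e ∈ E},
        x * j e * (spin (S (e : V × V).1) * spin (S (e : V × V).2))))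
    ∂(Measure.pi fun _ : {e // e ∈ E} => gaussianReal x 1)

/-- The nearest-neighbor bonds of the cube `Λ_L = {0, …, L−1}^d` with free boundary
conditions: pairs `(n, n')` with `n' = n + eᵢ` for some direction `i` (no wrap-around). -/
def cubeBonds (d L : ℕ) : Finset ((Fin d → Fin L) × (Fin d → Fin L)) :=
  Finset.univ.filter fun p => ∃ i : Fin d,
    (∀ k, k ≠ i → p.2 k = p.1 k) ∧ ((p.2 i : ℕ) = (p.1 i : ℕ) + 1)

/-- The nearest-neighbor bonds of the discrete torus `Π_L = (ℤ/Lℤ)^d`: pairs `(n, n')`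
with `n' = n + eᵢ` modulo `L` in some direction `i`. -/
def torusBonds (d L : ℕ) : Finset ((Fin d → Fin L) × (Fin d → Fin L)) :=
  Finset.univ.filter fun p => ∃ i : Fin d,
    (∀ k, k ≠ i → p.2 k = p.1 k) ∧ ((p.2 i : ℕ) = ((p.1 i : ℕ) + 1) % L)


/-! ### Gaussian product measures -/

/-- Product of unit-variance Gaussians with means `c e`. -/
def gm {ι : Type*} [Fintype ι] (c : ι → ℝ) : Measure (ι → ℝ) :=
  Measure.pi fun e => gaussianReal (c e) 1

instance {ι : Type*} [Fintype ι] (c : ι → ℝ) : IsProbabilityMeasure (gm c) := by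
  unfold gm; infer_instance

lemma pi_map_injective {ι κ : Type*} [Fintype ι] [Fintype κ] (f : ι → κ)
    (hf : Function.Injective f) (μ : κ → Measure ℝ) [∀ k, IsProbabilityMeasure (μ k)] :
    (Measure.pi μ).map (fun j e => j (f e)) = Measure.pi (fun e => μ (f e)) := by
  classical
  refine (Measure.pi_eq fun s hs => ?_).symm
  rw [Measure.map_apply (by fun_prop) (MeasurableSet.univ_pi hs)]
  have : (fun (j : κ → ℝ) e => j (f e)) ⁻¹' (Set.univ.pi s) =
      Set.univ.pi (fun k => {y | ∀ e, f e = k → y ∈ s e}) := by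
    ext j
    simp only [Set.mem_preimage, Set.mem_pi, Set.mem_univ, forall_true_left, Set.mem_ofPred_eq]
    constructor
    · rintro h k e rfl
      exact h e
    · intro h e
      exact h _ e rfl
  rw [this, Measure.pi_pi]
  have h1 : ∀ k ∈ Finset.univ, k ∉ Finset.univ.image f →
      μ k {y | ∀ e, f e = k → y ∈ s e} = 1 := by
    intro k _ hk
    have : {y : ℝ | ∀ e, f e = k → y ∈ s e} = Set.univ := by
      ext y
      simp only [Set.mem_ofPred_eq, Set.mem_univ, iff_true]
      intro e he
      exact absurd (Finset.mem_image.2 ⟨e, Finset.mem_univ _, he⟩) hk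
    rw [this, measure_univ]
  rw [← Finset.prod_subset (Finset.subset_univ _) h1, Finset.prod_image (fun a _ b _ h => hf h)]
  refine Finset.prod_congr rfl fun e _ => ?_
  congr 1
  ext y
  simp only [Set.mem_ofPred_eq]
  constructor
  · intro h; exact h e rfl
  · intro h e' he'
    rw [hf he']; exact h

lemma gm_integral_comp {ι κ : Type*} [Fintype ι] [Fintype κ] (f : ι → κ)
    (hf : Function.Injective f) (c : κ → ℝ) (h : (ι → ℝ) → ℝ) (hh : Measurable h) :
    ∫ j, h (fun e => j (f e)) ∂(gm c) = ∫ j, h j ∂(gm fun e => c (f e)) := by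
  unfold gm
  rw [← pi_map_injective f hf (fun k => gaussianReal (c k) 1),
    integral_map (Measurable.aemeasurable (by fun_prop)) hh.aestronglyMeasurable]

/-- integrals of functions depending only on coordinates in `A`. -/
lemma gm_integral_congr {ι : Type*} [Fintype ι] (A : Finset ι) (c c' : ι → ℝ)
    (hc : ∀ e ∈ A, c e = c' e) (h : (ι → ℝ) → ℝ) (hh : Measurable h)
    (hA : ∀ j j' : ι → ℝ, (∀ e ∈ A, j e = j' e) → h j = h j') :
    ∫ j, h j ∂(gm c) = ∫ j, h j ∂(gm c') := by
  classical
  let ext0 : ({e // e ∈ A} → ℝ) → ι → ℝ := fun j e => if he : e ∈ A then j ⟨e, he⟩ else 0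
  have hm : Measurable ext0 := by
    refine measurable_pi_lambda _ fun e => ?_
    by_cases he : e ∈ A
    · simp only [ext0, he, dite_true]; fun_prop
    · simp only [ext0, he, dite_false]; fun_prop
  have key : ∀ j : ι → ℝ, h j = (h ∘ ext0) (fun e : {e // e ∈ A} => j e) := by
    intro j
    apply hA
    intro e he
    simp [ext0, he]
  simp_rw [key]
  rw [gm_integral_comp (Subtype.val : {e // e ∈ A} → ι) Subtype.val_injective c _ (hh.comp hm),
    gm_integral_comp (Subtype.val : {e // e ∈ A} → ι) Subtype.val_injective c' _ (hh.comp hm)]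
  have : (fun e : {e // e ∈ A} => c e) = fun e : {e // e ∈ A} => c' e := by
    funext e; exact hc e e.2
  rw [this]

lemma gaussian_density (c : ℝ) : gaussianReal c 1 =
    (gaussianReal 0 1).withDensity (fun y => ENNReal.ofReal (Real.exp (c * y - c ^ 2 / 2))) := by
  rw [gaussianReal_of_var_ne_zero _ one_ne_zero, gaussianReal_of_var_ne_zero _ one_ne_zero,
    ← withDensity_mul _ (measurable_gaussianPDF _ _) (by fun_prop)]
  congr 1
  funext y
  simp only [gaussianPDF, gaussianPDFReal, Pi.mul_apply]
  rw [← ENNReal.ofReal_mul (by positivity), mul_assoc _ (Real.exp _) (Real.exp _), ← Real.exp_add]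
  congr 3
  simp
  ring

lemma integrable_exp_gauss (m t a : ℝ) :
    Integrable (fun y => Real.exp (t * y - a)) (gaussianReal m 1) := by
  have := (integrable_exp_mul_gaussianReal (μ := m) (v := 1) t).mul_const (Real.exp (-a))
  refine this.congr (Filter.Eventually.of_forall fun y => ?_)
  simp only [← Real.exp_add, sub_eq_add_neg]

lemma gm_density {ι : Type*} [Fintype ι] (c : ι → ℝ) : gm c =
    (gm 0).withDensity (fun j => ENNReal.ofReal (Real.exp (∑ e, (c e * j e - c e ^ 2 / 2)))) := by
  unfold gm
  refine Measure.pi_eq fun s hs => ?_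
  rw [withDensity_apply _ (MeasurableSet.univ_pi hs), Measure.restrict_pi_pi]
  simp_rw [Real.exp_sum]
  have hi : ∀ e, Integrable (fun y => Real.exp (c e * y - c e ^ 2 / 2))
      ((gaussianReal ((0 : ι → ℝ) e) 1).restrict (s e)) := fun e =>
    (integrable_exp_gauss _ _ _).restrict
  rw [← ofReal_integral_eq_lintegral_ofReal (Integrable.fintype_prod_dep (f := fun e y =>
      Real.exp (c e * y - c e ^ 2 / 2)) hi)
    (Filter.Eventually.of_forall fun j => Finset.prod_nonneg fun e _ => (Real.exp_pos _).le),
    integral_fintype_prod_eq_prod (f := fun e y => Real.exp (c e * y - c e ^ 2 / 2)),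
    ENNReal.ofReal_prod_of_nonneg (fun e _ => integral_nonneg fun _ => (Real.exp_pos _).le)]
  refine Finset.prod_congr rfl fun e _ => ?_
  rw [gaussian_density (c e), withDensity_apply _ (hs e), ofReal_integral_eq_lintegral_ofReal (hi e)
    (Filter.Eventually.of_forall fun j => (Real.exp_pos _).le)]
  rfl

lemma gm_integral_density {ι : Type*} [Fintype ι] (c : ι → ℝ) (h : (ι → ℝ) → ℝ) :
    ∫ j, h j ∂(gm c) = ∫ j, Real.exp (∑ e, (c e * j e - c e ^ 2 / 2)) * h j ∂(gm 0) := by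
  rw [gm_density c, integral_withDensity_eq_integral_toReal_smul (by fun_prop)
    (Filter.Eventually.of_forall fun _ => ENNReal.ofReal_lt_top)]
  simp [ENNReal.toReal_ofReal (Real.exp_pos _).le]

lemma gm_flip {ι : Type*} [Fintype ι] (s c : ι → ℝ) (hs : ∀ e, s e ^ 2 = 1)
    (h : (ι → ℝ) → ℝ) (hh : Measurable h) :
    ∫ j, h (fun e => s e * j e) ∂(gm c) = ∫ j, h j ∂(gm fun e => s e * c e) := by
  have h1 : ∀ e, (gaussianReal (c e) 1).map (fun y => s e * y) = gaussianReal (s e * c e) 1 := by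
    intro e
    have := gaussianReal_map_const_mul (μ := c e) (v := 1) (s e)
    rw [this]
    congr 1
    ext
    simp [hs e]
  have h2 : (gm c).map (fun j e => s e * j e) = gm fun e => s e * c e := by
    unfold gm
    have : ∀ e, SigmaFinite ((gaussianReal (c e) 1).map (fun y => s e * y)) := by
      intro e; rw [h1]; infer_instance
    rw [Measure.pi_map_pi (f := fun e y => s e * y) (fun e => by fun_prop)]
    simp_rw [h1]
  rw [← h2, integral_map (Measurable.aemeasurable (by fun_prop)) hh.aestronglyMeasurable]

lemma gm_integrable_exp {ι : Type*} [Fintype ι] (c : ι → ℝ) (k : ℝ) :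
    Integrable (fun j : ι → ℝ => Real.exp (∑ e, k * |j e|)) (gm c) := by
  simp_rw [Real.exp_sum]
  refine Integrable.fintype_prod_dep (f := fun _ y => Real.exp (k * |y|)) fun e => ?_
  refine Integrable.mono' ((integrable_exp_gauss (c e) k 0).add (integrable_exp_gauss (c e) (-k) 0))
    (by fun_prop) (Filter.Eventually.of_forall fun y => ?_)
  simp only [Real.norm_eq_abs, Real.abs_exp, Pi.add_apply, sub_zero]
  rcases abs_choice y with h | h <;> rw [h]
  · linarith [Real.exp_pos (-k * y)]
  · rw [mul_neg, ← neg_mul]; linarith [Real.exp_pos (k * y)]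

lemma gm_integrable_of_exp_bound {ι : Type*} [Fintype ι] (c : ι → ℝ) (C k : ℝ) (h : (ι → ℝ) → ℝ)
    (hh : Measurable h) (hb : ∀ j, |h j| ≤ Real.exp (C + ∑ e, k * |j e|)) : Integrable h (gm c) := by
  refine Integrable.mono' ((gm_integrable_exp c k).const_mul (Real.exp C)) hh.aestronglyMeasurable
    (Filter.Eventually.of_forall fun j => ?_)
  rw [← Real.exp_add]
  exact hb j

/-! ### Spin averages on a finite vertex set -/

section spins

set_option linter.unusedSectionVars false

variable {V : Type*} [Fintype V] [DecidableEq V]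

/-- bond variable -/
def sg (S : V → Bool) (e : V × V) : ℝ := spin (S e.1) * spin (S e.2)

lemma spin_sq (b : Bool) : spin b ^ 2 = 1 := by cases b <;> simp [spin]

lemma spin_abs (b : Bool) : |spin b| = 1 := by cases b <;> simp [spin]

lemma sg_sq {W : Type*} (S : W → Bool) (e : W × W) : spin (S e.1) * spin (S e.2) * (spin (S e.1) * spin (S e.2)) = 1 := by
  have h1 := spin_sq (S e.1)
  have h2 := spin_sq (S e.2)
  calc _ = spin (S e.1) ^ 2 * spin (S e.2) ^ 2 := by ring
    _ = 1 := by rw [h1, h2, one_mul]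

lemma sg_sq' (S : V → Bool) (e : V × V) : sg S e ^ 2 = 1 := by
  rw [pow_two]; exact sg_sq S e

lemma sg_abs (S : V → Bool) (e : V × V) : |sg S e| = 1 := by
  unfold sg; rw [abs_mul, spin_abs, spin_abs, one_mul]

lemma spin_beq (a b : Bool) : spin (a == b) = spin a * spin b := by
  cases a <;> cases b <;> simp [spin]

lemma sg_beq (S T : V → Bool) (e : V × V) : sg (fun v => S v == T v) e = sg S e * sg T e := by
  unfold sg; rw [spin_beq, spin_beq]; ring

/-- Weight. -/
def wt (x : ℝ) (A : Finset (V × V)) (S : V → Bool) (j : V × V → ℝ) : ℝ :=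
  Real.exp (∑ e ∈ A, (x * sg S e * j e - x ^ 2 / 2))

/-- Average over spins. -/
def av (f : (V → Bool) → ℝ) : ℝ := (Fintype.card (V → Bool) : ℝ)⁻¹ * ∑ S, f S

lemma cardpos : (0 : ℝ) < Fintype.card (V → Bool) := by
  exact_mod_cast Fintype.card_pos

lemma av_mono {f g : (V → Bool) → ℝ} (h : ∀ S, f S ≤ g S) : av f ≤ av g := by
  unfold av
  exact mul_le_mul_of_nonneg_left (Finset.sum_le_sum fun S _ => h S) (inv_nonneg.2 cardpos.le)

lemma av_const (c : ℝ) : av (fun _ : V → Bool => c) = c := by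
  unfold av
  rw [Finset.sum_const, nsmul_eq_mul, Finset.card_univ, ← mul_assoc,
    inv_mul_cancel₀ cardpos.ne', one_mul]

lemma av_mul_const (f : (V → Bool) → ℝ) (c : ℝ) : av (fun S => f S * c) = av f * c := by
  unfold av
  rw [← Finset.sum_mul, mul_assoc]

lemma av_integral {ι : Type*} [Fintype ι] (c : ι → ℝ) (f : (V → Bool) → (ι → ℝ) → ℝ)
    (hf : ∀ S, Integrable (f S) (gm c)) :
    ∫ j, av (fun S => f S j) ∂(gm c) = av fun S => ∫ j, f S j ∂(gm c) := by
  unfold av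
  rw [integral_const_mul, integral_finsetSum _ fun S _ => hf S]

/-- Normalised partition function. -/
def Dn (x : ℝ) (A : Finset (V × V)) (j : V × V → ℝ) : ℝ := av fun S => wt x A S j

/-- The exponent bound. -/
def Bd (x : ℝ) (j : V × V → ℝ) : ℝ :=
  Fintype.card (V × V) * (x ^ 2 / 2) + ∑ e, |x| * |j e|

lemma wt_pos (x : ℝ) (A : Finset (V × V)) (S : V → Bool) (j : V × V → ℝ) : 0 < wt x A S j :=
  Real.exp_pos _

lemma abs_term (x : ℝ) (S : V → Bool) (j : V × V → ℝ) (e : V × V) :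
    |x * sg S e * j e| = |x| * |j e| := by
  rw [abs_mul, abs_mul, sg_abs, mul_one]

lemma exponent_bound (x : ℝ) (A : Finset (V × V)) (S : V → Bool) (j : V × V → ℝ) :
    |∑ e ∈ A, (x * sg S e * j e - x ^ 2 / 2)| ≤ Bd x j := by
  refine (Finset.abs_sum_le_sum_abs _ _).trans ?_
  have h1 : ∀ e, |x * sg S e * j e - x ^ 2 / 2| ≤ x ^ 2 / 2 + |x| * |j e| := by
    intro e
    refine (abs_sub _ _).trans ?_
    rw [abs_term, abs_of_nonneg (by positivity : 0 ≤ x ^ 2 / 2), add_comm]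
  refine (Finset.sum_le_sum fun e _ => h1 e).trans ?_
  refine (Finset.sum_le_univ_sum_of_nonneg fun e => by positivity).trans ?_
  rw [Finset.sum_add_distrib]
  simp [Bd]

lemma wt_le (x : ℝ) (A : Finset (V × V)) (S : V → Bool) (j : V × V → ℝ) :
    wt x A S j ≤ Real.exp (Bd x j) :=
  Real.exp_le_exp.2 ((le_abs_self _).trans (exponent_bound x A S j))

lemma le_wt (x : ℝ) (A : Finset (V × V)) (S : V → Bool) (j : V × V → ℝ) :
    Real.exp (-Bd x j) ≤ wt x A S j :=
  Real.exp_le_exp.2 ((neg_le_neg (exponent_bound x A S j)).trans (neg_abs_le _))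

lemma Dn_le (x : ℝ) (A : Finset (V × V)) (j : V × V → ℝ) : Dn x A j ≤ Real.exp (Bd x j) :=
  (av_mono fun S => wt_le x A S j).trans (av_const _).le

lemma le_Dn (x : ℝ) (A : Finset (V × V)) (j : V × V → ℝ) : Real.exp (-Bd x j) ≤ Dn x A j :=
  (av_const (V := V) _).ge.trans (av_mono fun S => le_wt x A S j)

lemma Dn_pos (x : ℝ) (A : Finset (V × V)) (j : V × V → ℝ) : 0 < Dn x A j :=
  (Real.exp_pos _).trans_le (le_Dn x A j)

lemma Dn_inv_le (x : ℝ) (A : Finset (V × V)) (j : V × V → ℝ) :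
    (Dn x A j)⁻¹ ≤ Real.exp (Bd x j) := by
  rw [inv_le_comm₀ (Dn_pos _ _ _) (Real.exp_pos _), ← Real.exp_neg]
  exact le_Dn x A j

@[fun_prop]
lemma wt_meas (x : ℝ) (A : Finset (V × V)) (S : V → Bool) : Measurable (wt x A S) := by
  unfold wt; fun_prop

@[fun_prop]
lemma Dn_meas (x : ℝ) (A : Finset (V × V)) : Measurable (Dn x A) := by
  unfold Dn av; fun_prop

lemma abs_log_Dn (x : ℝ) (A : Finset (V × V)) (j : V × V → ℝ) :
    |Real.log (Dn x A j)| ≤ Bd x j := by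
  rw [abs_le]
  constructor
  · rw [← Real.log_exp (-Bd x j)]
    exact Real.log_le_log (Real.exp_pos _) (le_Dn x A j)
  · rw [← Real.log_exp (Bd x j)]
    exact Real.log_le_log (Dn_pos _ _ _) (Dn_le x A j)

/-- measurable functions bounded by `exp (n * Bd)` are integrable -/
lemma integrable_of_Bd (x : ℝ) (c : V × V → ℝ) (n : ℝ) (h : (V × V → ℝ) → ℝ) (hh : Measurable h)
    (hb : ∀ j, |h j| ≤ Real.exp (n * Bd x j)) : Integrable h (gm c) := by
  refine gm_integrable_of_exp_bound c (n * (Fintype.card (V × V) * (x ^ 2 / 2))) (n * |x|) h hh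
    fun j => (hb j).trans (le_of_eq ?_)
  unfold Bd
  rw [mul_add, Finset.mul_sum]
  simp only [mul_assoc]

lemma integrable_log_Dn (x : ℝ) (A : Finset (V × V)) (c : V × V → ℝ) :
    Integrable (fun j => Real.log (Dn x A j)) (gm c) := by
  refine integrable_of_Bd x c 1 _ (by fun_prop) fun j => (abs_log_Dn x A j).trans ?_
  rw [one_mul]
  linarith [Real.add_one_le_exp (Bd x j)]

lemma wt_dep (x : ℝ) (A : Finset (V × V)) (S : V → Bool) (j j' : V × V → ℝ)
    (h : ∀ e ∈ A, j e = j' e) : wt x A S j = wt x A S j' := by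
  unfold wt
  rw [Finset.sum_congr rfl fun e he => by rw [h e he]]

lemma Dn_dep (x : ℝ) (A : Finset (V × V)) (j j' : V × V → ℝ)
    (h : ∀ e ∈ A, j e = j' e) : Dn x A j = Dn x A j' := by
  unfold Dn
  simp_rw [wt_dep x A _ j j' h]

/-- gauge equivalence -/
def spinGauge (T : V → Bool) : (V → Bool) ≃ (V → Bool) where
  toFun S := fun v => S v == T v
  invFun S := fun v => S v == T v
  left_inv S := by funext v; cases h : S v <;> cases h' : T v <;> simp [h, h']
  right_inv S := by funext v; cases h : S v <;> cases h' : T v <;> simp [h, h']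

lemma Dn_gauge (x : ℝ) (A : Finset (V × V)) (T : V → Bool) (j : V × V → ℝ) :
    Dn x A (fun e => sg T e * j e) = Dn x A j := by
  unfold Dn av
  congr 1
  refine Fintype.sum_equiv (spinGauge T) _ _ fun S => ?_
  unfold wt
  congr 1
  refine Finset.sum_congr rfl fun e _ => ?_
  have : sg (spinGauge T S) e = sg S e * sg T e := sg_beq S T e
  rw [this]
  ring

/-- planted means -/
def pm (x : ℝ) (U : Finset (V × V)) (S : V → Bool) (e : V × V) : ℝ :=
  if e ∈ U then x * sg S e else 0

lemma wt_eq (x : ℝ) (U : Finset (V × V)) (S : V → Bool) (j : V × V → ℝ) :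
    Real.exp (∑ e, (pm x U S e * j e - pm x U S e ^ 2 / 2)) = wt x U S j := by
  unfold wt pm
  congr 1
  rw [← Finset.sum_filter_add_sum_filter_not Finset.univ (fun e => e ∈ U)]
  have h0 : ∑ e ∈ Finset.univ.filter (fun e => ¬ e ∈ U),
      ((if e ∈ U then x * sg S e else 0) * j e - (if e ∈ U then x * sg S e else 0) ^ 2 / 2) = 0 := by
    refine Finset.sum_eq_zero fun e he => ?_
    rw [Finset.mem_filter] at he
    simp [he.2]
  rw [h0, add_zero, Finset.filter_mem_eq_inter, Finset.univ_inter]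
  refine Finset.sum_congr rfl fun e he => ?_
  rw [if_pos he, mul_pow, sg_sq', mul_one]

/-- The normalised free energy. -/
def Nf (x : ℝ) (A : Finset (V × V)) : ℝ := ∫ j, Real.log (Dn x A j) ∂(gm fun _ => x)

lemma Nf_eq (x : ℝ) (A U : Finset (V × V)) (hA : A ⊆ U) (S : V → Bool) :
    Nf x A = ∫ j, Real.log (Dn x A j) ∂(gm (pm x U S)) := by
  have h1 := gm_flip (sg S) (fun _ => x) (sg_sq' S) (fun j => Real.log (Dn x A j)) (by fun_prop)
  simp only [Dn_gauge] at h1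
  unfold Nf
  rw [h1]
  refine gm_integral_congr A _ _ (fun e he => ?_) _ (by fun_prop) fun j j' h => by
    rw [Dn_dep x A j j' h]
  rw [pm, if_pos (hA he), mul_comm]

lemma av_planted (x : ℝ) (U : Finset (V × V)) (R : (V × V → ℝ) → ℝ)
    (hR : Measurable R) (n : ℝ) (hb : ∀ j, |R j| ≤ Real.exp (n * Bd x j)) :
    (av fun S => ∫ j, R j ∂(gm (pm x U S))) = ∫ j, Dn x U j * R j ∂(gm 0) := by
  simp_rw [Dn, ← av_mul_const]
  rw [av_integral]
  · congr 1
    funext S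
    rw [gm_integral_density]
    simp_rw [wt_eq]
  · intro S
    refine integrable_of_Bd x _ (n + 1) _ (by fun_prop) fun j => ?_
    rw [abs_mul, abs_of_pos (wt_pos _ _ _ _), add_mul, one_mul, Real.exp_add, mul_comm]
    exact mul_le_mul (hb j) (wt_le _ _ _ _) (wt_pos _ _ _ _).le (Real.exp_pos _).le

lemma Dn_int (x : ℝ) (U : Finset (V × V)) : ∫ j, Dn x U j ∂(gm 0) = 1 := by
  have := av_planted x U (fun _ => 1) (by fun_prop) 0 (by simp)
  simp only [mul_one] at this
  rw [← this]
  simp [av_const]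

lemma log_ge (u : ℝ) (hu : 0 < u) : 1 - u⁻¹ ≤ Real.log u := Real.one_sub_inv_le_log_of_pos hu

lemma Nf_nonneg (x : ℝ) (A : Finset (V × V)) : 0 ≤ Nf x A := by
  have hb : ∀ j : V × V → ℝ, |(Dn x A j)⁻¹| ≤ Real.exp (1 * Bd x j) := fun j => by
    rw [abs_of_pos (inv_pos.2 (Dn_pos _ _ _)), one_mul]; exact Dn_inv_le x A j
  have h1 : ∀ S : V → Bool, 1 - ∫ j, (Dn x A j)⁻¹ ∂(gm (pm x A S)) ≤ Nf x A := by
    intro S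
    rw [Nf_eq x A A subset_rfl S]
    have hi : Integrable (fun j => (Dn x A j)⁻¹) (gm (pm x A S)) :=
      integrable_of_Bd x _ 1 _ (by fun_prop) hb
    have : 1 - ∫ j, (Dn x A j)⁻¹ ∂(gm (pm x A S)) = ∫ j, (1 - (Dn x A j)⁻¹) ∂(gm (pm x A S)) := by
      rw [integral_sub (integrable_const _) hi]; simp
    rw [this]
    exact integral_mono ((integrable_const _).sub hi) (integrable_log_Dn _ _ _)
      fun j => log_ge _ (Dn_pos _ _ _)
  have h2 := av_planted x A (fun j => (Dn x A j)⁻¹) (by fun_prop) 1 hb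
  simp_rw [mul_inv_cancel₀ (Dn_pos x A _).ne'] at h2
  simp only [integral_const, probReal_univ, smul_eq_mul, mul_one] at h2
  have h3 : (av fun S => ∫ j, (Dn x A j)⁻¹ ∂(gm (pm x A S))) ≥ av fun _ => 1 - Nf x A :=
    av_mono fun S => by linarith [h1 S]
  rw [h2, av_const] at h3
  linarith

lemma wt_mul (x : ℝ) (E F : Finset (V × V)) (S T : V → Bool) :
    ∃ c : V × V → ℝ, (∀ e ∈ E ∩ F, c e = 0) ∧ ∀ j, wt x E S j * wt x F T j =
      Real.exp (∑ e, (c e * j e - c e ^ 2 / 2)) * (wt x (E ∩ F) S j * wt x (E ∩ F) T j) := by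
  refine ⟨fun e => pm x (E \ F) S e + pm x (F \ E) T e, ?_, ?_⟩
  · intro e he
    rw [Finset.mem_inter] at he
    simp [pm, he.1, he.2]
  · intro j
    have h1 : Real.exp (∑ e, ((pm x (E \ F) S e + pm x (F \ E) T e) * j e
        - (pm x (E \ F) S e + pm x (F \ E) T e) ^ 2 / 2)) = wt x (E \ F) S j * wt x (F \ E) T j := by
      rw [← wt_eq, ← wt_eq, ← Real.exp_add, ← Finset.sum_add_distrib]
      congr 1
      refine Finset.sum_congr rfl fun e _ => ?_
      have : pm x (E \ F) S e * pm x (F \ E) T e = 0 := by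
        unfold pm
        by_cases h : e ∈ F <;> simp [h]
      linear_combination (-1 : ℝ) * this
    have h2 : ∀ (A B : Finset (V × V)) (S : V → Bool),
        wt x A S j = wt x (A \ B) S j * wt x (A ∩ B) S j := by
      intro A B S
      unfold wt
      rw [← Real.exp_add, add_comm, Finset.sum_inter_add_sum_sdiff]
    rw [h1, h2 E F S, h2 F E T, Finset.inter_comm F E]
    ring

lemma ratio_int (x : ℝ) (E F : Finset (V × V)) :
    ∫ j, Dn x E j * Dn x F j * (Dn x (E ∩ F) j)⁻¹ ∂(gm 0) = 1 := by
  have hIntg : ∀ (A B : Finset (V × V)) (S T : V → Bool),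
      Integrable (fun j => wt x A S j * wt x B T j * (Dn x (E ∩ F) j)⁻¹) (gm 0) := by
    intro A B S T
    refine integrable_of_Bd x _ (1 + 1 + 1) _ (by fun_prop) fun j => ?_
    rw [abs_of_pos (mul_pos (mul_pos (wt_pos _ _ _ _) (wt_pos _ _ _ _)) (inv_pos.2 (Dn_pos _ _ _))),
      add_mul, add_mul, one_mul, Real.exp_add, Real.exp_add]
    have := wt_pos x A S j
    have := wt_pos x B T j
    have := Dn_pos x (E ∩ F) j
    exact mul_le_mul (mul_le_mul (wt_le _ _ _ _) (wt_le _ _ _ _) (by positivity) (by positivity))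
      (Dn_inv_le _ _ _) (by positivity) (by positivity)
  have expand : ∀ A B : Finset (V × V), ∫ j, Dn x A j * Dn x B j * (Dn x (E ∩ F) j)⁻¹ ∂(gm 0)
      = (Fintype.card (V → Bool) : ℝ)⁻¹ * (Fintype.card (V → Bool) : ℝ)⁻¹ *
        ∑ S : V → Bool, ∑ T : V → Bool,
          ∫ j, wt x A S j * wt x B T j * (Dn x (E ∩ F) j)⁻¹ ∂(gm 0) := by
    intro A B
    have : ∀ j, Dn x A j * Dn x B j * (Dn x (E ∩ F) j)⁻¹ =
        (Fintype.card (V → Bool) : ℝ)⁻¹ * (Fintype.card (V → Bool) : ℝ)⁻¹ *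
        ∑ S : V → Bool, ∑ T : V → Bool, wt x A S j * wt x B T j * (Dn x (E ∩ F) j)⁻¹ := by
      intro j
      simp_rw [← Finset.sum_mul]
      rw [← Finset.sum_mul_sum]
      generalize (Dn x (E ∩ F) j)⁻¹ = z
      unfold Dn av
      ring
    simp_rw [this]
    rw [integral_const_mul, integral_finsetSum]
    · congr 1
      refine Finset.sum_congr rfl fun S _ => ?_
      rw [integral_finsetSum]
      exact fun T _ => hIntg A B S T
    · exact fun S _ => integrable_finsetSum _ fun T _ => hIntg A B S T
  have swap : ∀ S T : V → Bool, ∫ j, wt x E S j * wt x F T j * (Dn x (E ∩ F) j)⁻¹ ∂(gm 0) =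
      ∫ j, wt x (E ∩ F) S j * wt x (E ∩ F) T j * (Dn x (E ∩ F) j)⁻¹ ∂(gm 0) := by
    intro S T
    obtain ⟨c, hc0, hc⟩ := wt_mul x E F S T
    simp_rw [hc]
    rw [← gm_integral_congr (E ∩ F) c 0 (by simpa using hc0) (fun j =>
      wt x (E ∩ F) S j * wt x (E ∩ F) T j * (Dn x (E ∩ F) j)⁻¹) (by fun_prop)]
    · rw [gm_integral_density c]
      congr 1
      funext j
      ring
    · intro j j' h
      simp only [wt_dep x _ S j j' h, wt_dep x _ T j j' h, Dn_dep x _ j j' h]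
  rw [expand]
  simp_rw [swap]
  rw [← expand (E ∩ F) (E ∩ F), ← Dn_int x (E ∩ F)]
  congr 1
  funext j
  rw [mul_assoc, mul_inv_cancel₀ (Dn_pos _ _ _).ne', mul_one]

lemma Nf_supermod (x : ℝ) (E F : Finset (V × V)) :
    Nf x E + Nf x F ≤ Nf x (E ∪ F) + Nf x (E ∩ F) := by
  set R : (V × V → ℝ) → ℝ := fun j =>
    Dn x E j * Dn x F j * (Dn x (E ∩ F) j)⁻¹ * (Dn x (E ∪ F) j)⁻¹ with hR
  have hpos : ∀ j, 0 < R j := fun j => by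
    have := Dn_pos x E j
    have := Dn_pos x F j
    have := Dn_pos x (E ∩ F) j
    have := Dn_pos x (E ∪ F) j
    positivity
  have hRm : Measurable R := by fun_prop
  have hb : ∀ j, |R j| ≤ Real.exp ((1 + 1 + 1 + 1) * Bd x j) := fun j => by
    rw [abs_of_pos (hpos j), add_mul, add_mul, add_mul, one_mul, Real.exp_add, Real.exp_add,
      Real.exp_add]
    have := Dn_pos x E j
    have := Dn_pos x F j
    have := Dn_pos x (E ∩ F) j
    have := Dn_pos x (E ∪ F) j
    exact mul_le_mul (mul_le_mul (mul_le_mul (Dn_le _ _ _) (Dn_le _ _ _) (by positivity)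
      (by positivity)) (Dn_inv_le _ _ _) (by positivity) (by positivity)) (Dn_inv_le _ _ _)
      (by positivity) (by positivity)
  have h1 : ∀ S : V → Bool, 1 - ∫ j, R j ∂(gm (pm x (E ∪ F) S)) ≤
      Nf x (E ∪ F) + Nf x (E ∩ F) - Nf x E - Nf x F := by
    intro S
    rw [Nf_eq x (E ∪ F) (E ∪ F) subset_rfl S,
      Nf_eq x (E ∩ F) (E ∪ F) (Finset.inter_subset_left.trans Finset.subset_union_left) S,
      Nf_eq x E (E ∪ F) Finset.subset_union_left S, Nf_eq x F (E ∪ F) Finset.subset_union_right S]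
    have hi : Integrable R (gm (pm x (E ∪ F) S)) := integrable_of_Bd x _ _ _ hRm hb
    have e1 : 1 - ∫ j, R j ∂(gm (pm x (E ∪ F) S)) = ∫ j, (1 - R j) ∂(gm (pm x (E ∪ F) S)) := by
      rw [integral_sub (integrable_const _) hi]; simp
    have i1 := integrable_log_Dn x (E ∪ F) (pm x (E ∪ F) S)
    have i2 := integrable_log_Dn x (E ∩ F) (pm x (E ∪ F) S)
    have i3 := integrable_log_Dn x E (pm x (E ∪ F) S)
    have i4 := integrable_log_Dn x F (pm x (E ∪ F) S)
    have i12 : Integrable (fun j => Real.log (Dn x (E ∪ F) j) + Real.log (Dn x (E ∩ F) j))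
      (gm (pm x (E ∪ F) S)) := i1.add i2
    have i123 : Integrable (fun j => Real.log (Dn x (E ∪ F) j) + Real.log (Dn x (E ∩ F) j)
      - Real.log (Dn x E j)) (gm (pm x (E ∪ F) S)) := i12.sub i3
    rw [e1, ← integral_add i1 i2, ← integral_sub i12 i3, ← integral_sub i123 i4]
    refine integral_mono ((integrable_const _).sub hi) (i123.sub i4) fun j => ?_
    have := log_ge (R j)⁻¹ (inv_pos.2 (hpos j))
    rw [inv_inv, Real.log_inv] at this
    refine this.trans (le_of_eq ?_)
    have p1 := (Dn_pos x E j).ne'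
    have p2 := (Dn_pos x F j).ne'
    have p3 := (Dn_pos x (E ∩ F) j).ne'
    have p4 := (Dn_pos x (E ∪ F) j).ne'
    simp only [hR]
    rw [Real.log_mul (by positivity) (by positivity), Real.log_mul (by positivity) (by positivity),
      Real.log_mul (by positivity) (by positivity), Real.log_inv, Real.log_inv]
    ring
  have h2 := av_planted x (E ∪ F) R hRm _ hb
  have h4 : ∀ j, Dn x (E ∪ F) j * R j = Dn x E j * Dn x F j * (Dn x (E ∩ F) j)⁻¹ := by
    intro j
    have p4 := (Dn_pos x (E ∪ F) j).ne'
    simp only [hR]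
    rw [mul_comm, mul_assoc, inv_mul_cancel₀ p4, mul_one]
  simp_rw [h4] at h2
  rw [ratio_int] at h2
  have h3 : (av fun S => ∫ j, R j ∂(gm (pm x (E ∪ F) S))) ≥
      av fun _ => 1 - (Nf x (E ∪ F) + Nf x (E ∩ F) - Nf x E - Nf x F) :=
    av_mono fun S => by linarith [h1 S]
  rw [h2, av_const] at h3
  linarith

end spins

/-! ### Further properties on a finite vertex set -/

section spins2

set_option linter.unusedSectionVars false

variable {V : Type*} [Fintype V] [DecidableEq V] {W : Type*} [Fintype W] [DecidableEq W]

/-- pressure without the entropy term -/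
def Qv (x : ℝ) (E : Finset (V × V)) : ℝ := Nf x E + E.card * (x ^ 2 / 2)

lemma sum_gauge (T : V → Bool) (f : (V → Bool) → ℝ) :
    ∑ S : V → Bool, f (fun v => S v == T v) = ∑ S : V → Bool, f S :=
  Fintype.sum_equiv (spinGauge T) _ _ fun _ => rfl

lemma beq_comm' (a b : Bool) : (a == b) = (b == a) := by cases a <;> cases b <;> rfl

lemma av_comp (φ : V → W) (hφ : Function.Injective φ) (g : (V → Bool) → ℝ) :
    (av fun S : W → Bool => g (fun v => S (φ v))) = av g := by
  have h1 : ∀ T : V → Bool, ∑ S : W → Bool, g (fun v => S (φ v)) =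
      ∑ S : W → Bool, g (fun v => T v == S (φ v)) := by
    intro T
    rw [← sum_gauge (Function.extend φ T fun _ => true)]
    refine Finset.sum_congr rfl fun S _ => ?_
    congr 1
    funext v
    beta_reduce
    rw [hφ.extend_apply, beq_comm']
  have h2 : (Fintype.card (V → Bool) : ℝ) * ∑ S : W → Bool, g (fun v => S (φ v)) =
      Fintype.card (W → Bool) * ∑ T : V → Bool, g T := by
    calc _ = ∑ T : V → Bool, ∑ S : W → Bool, g (fun v => S (φ v)) := by
          rw [Finset.sum_const, Finset.card_univ, nsmul_eq_mul]
      _ = ∑ T : V → Bool, ∑ S : W → Bool, g (fun v => T v == S (φ v)) :=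
          Finset.sum_congr rfl fun T _ => h1 T
      _ = ∑ S : W → Bool, ∑ T : V → Bool, g (fun v => T v == S (φ v)) := Finset.sum_comm
      _ = ∑ S : W → Bool, ∑ T : V → Bool, g T :=
          Finset.sum_congr rfl fun S _ => sum_gauge (fun v => S (φ v)) g
      _ = _ := by rw [Finset.sum_const, Finset.card_univ, nsmul_eq_mul]
  unfold av
  have c1 := (cardpos (V := V)).ne'
  have c2 := (cardpos (V := W)).ne'
  rw [inv_mul_eq_iff_eq_mul₀ c2, ← mul_assoc, mul_comm (Fintype.card (W → Bool) : ℝ), mul_assoc,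
    ← h2, ← mul_assoc, inv_mul_cancel₀ c1, one_mul]

open Classical in
lemma av_indep (A : V → Prop) (f g : (V → Bool) → ℝ)
    (hf : ∀ S T : V → Bool, (∀ v, A v → S v = T v) → f S = f T)
    (hg : ∀ S T : V → Bool, (∀ v, ¬ A v → S v = T v) → g S = g T) :
    (av fun S => f S * g S) = av f * av g := by
  have h1 : ∀ T : V → Bool, ∑ S : V → Bool, f S * g S =
      ∑ S : V → Bool, f (fun v => T v == S v) * g S := by
    intro T
    rw [← sum_gauge (fun v => if A v then T v else true)]
    refine Finset.sum_congr rfl fun S _ => ?_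
    congr 1
    · apply hf
      intro v hv
      rw [if_pos hv, beq_comm']
    · apply hg
      intro v hv
      rw [if_neg hv]
      cases S v <;> rfl
  have h2 : (Fintype.card (V → Bool) : ℝ) * ∑ S : V → Bool, f S * g S = (∑ S, f S) * ∑ S, g S := by
    calc _ = ∑ T : V → Bool, ∑ S : V → Bool, f S * g S := by
          rw [Finset.sum_const, Finset.card_univ, nsmul_eq_mul]
      _ = ∑ T : V → Bool, ∑ S : V → Bool, f (fun v => T v == S v) * g S :=
          Finset.sum_congr rfl fun T _ => h1 T
      _ = ∑ S : V → Bool, ∑ T : V → Bool, f (fun v => T v == S v) * g S := Finset.sum_comm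
      _ = ∑ S : V → Bool, (∑ T : V → Bool, f T) * g S :=
          Finset.sum_congr rfl fun S _ => by rw [← Finset.sum_mul, sum_gauge S f]
      _ = _ := by rw [Finset.mul_sum]
  unfold av
  have c1 := (cardpos (V := V)).ne'
  rw [inv_mul_eq_iff_eq_mul₀ c1]
  field_simp
  linarith

lemma wt_union_disj (x : ℝ) (A B : Finset (V × V)) (h : Disjoint A B) (S : V → Bool)
    (j : V × V → ℝ) : wt x (A ∪ B) S j = wt x A S j * wt x B S j := by
  unfold wt
  rw [← Real.exp_add, Finset.sum_union h]

lemma Qv_disj (x : ℝ) (A : V → Prop) (E F : Finset (V × V)) (hE : ∀ e ∈ E, A e.1 ∧ A e.2)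
    (hF : ∀ e ∈ F, ¬ A e.1 ∧ ¬ A e.2) : Qv x (E ∪ F) = Qv x E + Qv x F := by
  have hd : Disjoint E F := Finset.disjoint_left.2 fun e h1 h2 => (hF e h2).1 (hE e h1).1
  have hD : ∀ j, Dn x (E ∪ F) j = Dn x E j * Dn x F j := by
    intro j
    unfold Dn
    simp_rw [wt_union_disj x E F hd]
    refine av_indep A _ _ ?_ ?_
    · intro S T h
      unfold wt
      rw [Finset.sum_congr rfl fun e he => by
        rw [show sg S e = sg T e by unfold sg; rw [h _ (hE e he).1, h _ (hE e he).2]]]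
    · intro S T h
      unfold wt
      rw [Finset.sum_congr rfl fun e he => by
        rw [show sg S e = sg T e by unfold sg; rw [h _ (hF e he).1, h _ (hF e he).2]]]
  unfold Qv Nf
  simp_rw [hD, fun j => Real.log_mul (Dn_pos x E j).ne' (Dn_pos x F j).ne']
  rw [integral_add (integrable_log_Dn _ _ _) (integrable_log_Dn _ _ _), Finset.card_union_of_disjoint hd]
  push_cast
  ring

lemma Dn_image (x : ℝ) (φ : V → W) (hφ : Function.Injective φ) (E : Finset (V × V))
    (j : W × W → ℝ) :
    Dn x (E.image (Prod.map φ φ)) j = Dn x E (fun e => j (Prod.map φ φ e)) := by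
  unfold Dn
  rw [← av_comp φ hφ]
  congr 1
  funext S
  unfold wt
  rw [Finset.sum_image (fun a _ b _ h => (hφ.prodMap hφ) h)]
  rfl

lemma Qv_image (x : ℝ) (φ : V → W) (hφ : Function.Injective φ) (E : Finset (V × V)) :
    Qv x (E.image (Prod.map φ φ)) = Qv x E := by
  unfold Qv Nf
  simp_rw [Dn_image x φ hφ]
  rw [Finset.card_image_of_injective _ (hφ.prodMap hφ),
    gm_integral_comp (Prod.map φ φ) (hφ.prodMap hφ) (fun _ => x) (fun j => Real.log (Dn x E j))
      (by fun_prop)]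

lemma EApressure_eq (x : ℝ) (E : Finset (V × V)) :
    EApressure E x = Fintype.card V * Real.log 2 + Qv x E := by
  have h := gm_integral_comp (Subtype.val : {e // e ∈ E} → V × V) Subtype.val_injective
    (fun _ => x) (fun j => Real.log (∑ S : V → Bool, Real.exp (∑ e : {e // e ∈ E},
        x * j e * (spin (S (e : V × V).1) * spin (S (e : V × V).2))))) (by fun_prop)
  have h0 : EApressure E x = ∫ j, Real.log (∑ S : V → Bool, Real.exp (∑ e : {e // e ∈ E},
        x * j e * (spin (S (e : V × V).1) * spin (S (e : V × V).2)))) ∂(gm fun _ : V × V => x) := by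
    rw [h]; rfl
  rw [h0]
  have key : ∀ j : V × V → ℝ, Real.log (∑ S : V → Bool, Real.exp (∑ e : {e // e ∈ E},
        x * j e * (spin (S (e : V × V).1) * spin (S (e : V × V).2)))) =
      (Fintype.card V * Real.log 2 + E.card * (x ^ 2 / 2)) + Real.log (Dn x E j) := by
    intro j
    have e1 : ∀ S : V → Bool, Real.exp (∑ e : {e // e ∈ E},
        x * j e * (spin (S (e : V × V).1) * spin (S (e : V × V).2))) =
        wt x E S j * Real.exp (E.card * (x ^ 2 / 2)) := by
      intro S
      unfold wt
      rw [← Real.exp_add, Finset.sum_sub_distrib, Finset.sum_const, nsmul_eq_mul, sub_add_cancel,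
        ← Finset.sum_coe_sort E]
      congr 1
      refine Finset.sum_congr rfl fun e _ => ?_
      unfold sg
      ring
    simp_rw [e1]
    rw [← Finset.sum_mul]
    have e2 : ∑ S : V → Bool, wt x E S j = Fintype.card (V → Bool) * Dn x E j := by
      unfold Dn av
      rw [← mul_assoc, mul_inv_cancel₀ cardpos.ne', one_mul]
    rw [e2, Real.log_mul (mul_ne_zero cardpos.ne' (Dn_pos _ _ _).ne') (Real.exp_pos _).ne',
      Real.log_mul cardpos.ne' (Dn_pos _ _ _).ne', Real.log_exp]
    simp only [Fintype.card_pi, Fintype.card_bool, Finset.prod_const, Finset.card_univ]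
    push_cast
    rw [Real.log_pow]
    ring
  simp_rw [key]
  rw [integral_add (integrable_const _) (integrable_log_Dn _ _ _)]
  simp only [integral_const, probReal_univ, smul_eq_mul, one_mul]
  unfold Qv Nf
  ring

/-- constant bounding the gain per bond -/
def Cg (x : ℝ) : ℝ := |x| * (∫ y, |y| ∂(gaussianReal x 1)) + x ^ 2 / 2

lemma Cg_nonneg (x : ℝ) : 0 ≤ Cg x := by
  have : 0 ≤ ∫ y, |y| ∂(gaussianReal x 1) := integral_nonneg fun y => abs_nonneg y
  unfold Cg; positivity

lemma Qv_gain (x : ℝ) (A B : Finset (V × V)) : Qv x (A ∪ B) ≤ Qv x A + B.card * Cg x := by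
  have hp : ∀ j, Real.log (Dn x (A ∪ B) j) ≤ Real.log (Dn x A j) + ∑ e ∈ B, |x| * |j e| := by
    intro j
    rw [← Real.log_exp (∑ e ∈ B, |x| * |j e|), ← Real.log_mul (Dn_pos _ _ _).ne' (Real.exp_pos _).ne']
    refine Real.log_le_log (Dn_pos _ _ _) ?_
    unfold Dn
    rw [← av_mul_const]
    refine av_mono fun S => ?_
    rw [← Finset.union_sdiff_self_eq_union, wt_union_disj _ _ _ Finset.disjoint_sdiff]
    refine mul_le_mul_of_nonneg_left (Real.exp_le_exp.2 ?_) (wt_pos _ _ _ _).le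
    refine (Finset.sum_le_sum (g := fun e => |x| * |j e|) fun e _ => ?_).trans
      (Finset.sum_le_sum_of_subset_of_nonneg Finset.sdiff_subset fun e _ _ => by positivity)
    rw [← abs_term x S j e]
    have := le_abs_self (x * sg S e * j e)
    have : 0 ≤ x ^ 2 / 2 := by positivity
    linarith
  have hev : ∀ e : V × V, MeasurePreserving (fun j : V × V → ℝ => j e) (gm fun _ => x)
      (gaussianReal x 1) := fun e => measurePreserving_eval (fun _ : V × V => gaussianReal x 1) e
  have hig : Integrable (fun y : ℝ => |y|) (gaussianReal x 1) :=
    ((memLp_id_gaussianReal 1).integrable le_rfl).abs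
  have hIntg : ∀ e ∈ B, Integrable (fun j : V × V → ℝ => |x| * |j e|) (gm fun _ => x) :=
    fun e _ => ((hev e).integrable_comp_of_integrable hig).const_mul |x|
  have hval : ∀ e ∈ B, ∫ j : V × V → ℝ, |x| * |j e| ∂(gm fun _ => x) =
      |x| * ∫ y, |y| ∂(gaussianReal x 1) := by
    intro e _
    rw [integral_const_mul, ← (hev e).map_eq, integral_map (hev e).measurable.aemeasurable
      (by fun_prop)]
  have h1 : Nf x (A ∪ B) ≤ Nf x A + B.card * (|x| * ∫ y, |y| ∂(gaussianReal x 1)) := by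
    have hs := integrable_finsetSum B hIntg
    refine (integral_mono (integrable_log_Dn _ _ _) ((integrable_log_Dn _ _ _).add hs) hp).trans ?_
    simp only [Pi.add_apply]
    rw [integral_add (integrable_log_Dn _ _ _) hs, integral_finsetSum B hIntg,
      Finset.sum_congr rfl hval, Finset.sum_const, nsmul_eq_mul]
    rfl
  have h2 : ((A ∪ B).card : ℝ) ≤ A.card + B.card := by exact_mod_cast Finset.card_union_le A B
  have h3 : ((A ∪ B).card : ℝ) * (x ^ 2 / 2) ≤ (A.card + B.card) * (x ^ 2 / 2) :=
    mul_le_mul_of_nonneg_right h2 (by positivity)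
  unfold Qv Cg
  linarith

lemma Qv_nonneg (x : ℝ) (A : Finset (V × V)) : 0 ≤ Qv x A := by
  have := Nf_nonneg x A
  unfold Qv; positivity

lemma Qv_supermod (x : ℝ) (E F : Finset (V × V)) :
    Qv x E + Qv x F ≤ Qv x (E ∪ F) + Qv x (E ∩ F) := by
  have h := Nf_supermod x E F
  have h2 : ((E ∪ F).card : ℝ) + (E ∩ F).card = E.card + F.card := by
    exact_mod_cast Finset.card_union_add_card_inter E F
  unfold Qv
  linear_combination h - (x ^ 2 / 2) * h2

end spins2

/-! ### Arbitrary vertex types -/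

section lattice

set_option linter.unusedSectionVars false

variable {α : Type*} [DecidableEq α] {β : Type*} [DecidableEq β]

/-- vertices of a bond set -/
def verts (E : Finset (α × α)) : Finset α := E.image Prod.fst ∪ E.image Prod.snd

/-- restriction of bonds to a finite vertex set -/
def pull (W : Finset α) (E : Finset (α × α)) : Finset ({v // v ∈ W} × {v // v ∈ W}) :=
  Finset.univ.filter fun p => (p.1.1, p.2.1) ∈ E

lemma image_pull (W : Finset α) (E : Finset (α × α)) (h : verts E ⊆ W) :
    (pull W E).image (Prod.map Subtype.val Subtype.val) = E := by
  ext ⟨a, b⟩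
  simp only [pull, Finset.mem_image, Finset.mem_filter, Finset.mem_univ, true_and]
  constructor
  · rintro ⟨⟨p, q⟩, h1, h2⟩
    rw [← h2]; exact h1
  · intro hE
    have ha : a ∈ W := h (Finset.mem_union_left _ (Finset.mem_image_of_mem Prod.fst hE))
    have hb : b ∈ W := h (Finset.mem_union_right _ (Finset.mem_image_of_mem Prod.snd hE))
    exact ⟨(⟨a, ha⟩, ⟨b, hb⟩), hE, rfl⟩

/-- pressure functional on finite bond sets -/
def qa (x : ℝ) (E : Finset (α × α)) : ℝ := Qv x (pull (verts E) E)

lemma qa_pull (x : ℝ) (W : Finset α) (E : Finset (α × α)) (h : verts E ⊆ W) :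
    qa x E = Qv x (pull W E) := by
  have hinj : Function.Injective (fun v : {v // v ∈ verts E} => (⟨v.1, h v.2⟩ : {v // v ∈ W})) := by
    intro a b hab
    exact Subtype.ext (by simpa using hab)
  unfold qa
  rw [← Qv_image x _ hinj]
  congr 1
  have hv : Function.Injective (Prod.map (Subtype.val : {v // v ∈ W} → α)
    (Subtype.val : {v // v ∈ W} → α)) := Subtype.val_injective.prodMap Subtype.val_injective
  apply Finset.image_injective hv
  rw [image_pull W E h, Finset.image_image]
  exact image_pull (verts E) E subset_rfl

lemma pull_union (W : Finset α) (E F : Finset (α × α)) :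
    pull W (E ∪ F) = pull W E ∪ pull W F := by
  ext p; simp [pull]

lemma pull_inter (W : Finset α) (E F : Finset (α × α)) :
    pull W (E ∩ F) = pull W E ∩ pull W F := by
  ext p; simp [pull]

lemma verts_mono {E F : Finset (α × α)} (h : E ⊆ F) : verts E ⊆ verts F :=
  Finset.union_subset_union (Finset.image_subset_image h) (Finset.image_subset_image h)

lemma qa_supermod (x : ℝ) (E F : Finset (α × α)) :
    qa x E + qa x F ≤ qa x (E ∪ F) + qa x (E ∩ F) := by
  have h1 := verts_mono (Finset.subset_union_left (s₁ := E) (s₂ := F))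
  have h2 := verts_mono (Finset.subset_union_right (s₁ := E) (s₂ := F))
  have h3 := verts_mono (Finset.inter_subset_left.trans
    (Finset.subset_union_left (s₁ := E) (s₂ := F)) : E ∩ F ⊆ E ∪ F)
  rw [qa_pull x _ _ h1, qa_pull x _ _ h2, qa_pull x _ _ h3, qa_pull x (verts (E ∪ F)) _ subset_rfl,
    pull_union, pull_inter]
  exact Qv_supermod x _ _

lemma qa_disj (x : ℝ) (A : α → Prop) (E F : Finset (α × α)) (hE : ∀ e ∈ E, A e.1 ∧ A e.2)
    (hF : ∀ e ∈ F, ¬ A e.1 ∧ ¬ A e.2) : qa x (E ∪ F) = qa x E + qa x F := by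
  have h1 := verts_mono (Finset.subset_union_left (s₁ := E) (s₂ := F))
  have h2 := verts_mono (Finset.subset_union_right (s₁ := E) (s₂ := F))
  rw [qa_pull x _ _ h1, qa_pull x _ _ h2, qa_pull x (verts (E ∪ F)) _ subset_rfl,
    pull_union]
  refine Qv_disj x (fun v => A v.1) _ _ ?_ ?_
  · intro e he
    exact hE (e.1.1, e.2.1) (by simpa [pull] using he)
  · intro e he
    exact hF (e.1.1, e.2.1) (by simpa [pull] using he)

lemma qa_nonneg (x : ℝ) (E : Finset (α × α)) : 0 ≤ qa x E := Qv_nonneg x _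

lemma qa_empty (x : ℝ) : qa x (∅ : Finset (α × α)) = 0 := by
  have := qa_disj x (fun _ : α => True) ∅ ∅ (by simp) (by simp)
  simp at this
  exact this

lemma qa_mono (x : ℝ) {E F : Finset (α × α)} (h : E ⊆ F) : qa x E ≤ qa x F := by
  have h1 := qa_supermod x E (F \ E)
  rw [Finset.union_sdiff_of_subset h, Finset.inter_sdiff_self, qa_empty] at h1
  linarith [qa_nonneg x (F \ E)]

lemma qa_gain (x : ℝ) (E F : Finset (α × α)) : qa x (E ∪ F) ≤ qa x E + F.card * Cg x := by
  have h1 := verts_mono (Finset.subset_union_left (s₁ := E) (s₂ := F))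
  have h2 := verts_mono (Finset.subset_union_right (s₁ := E) (s₂ := F))
  rw [qa_pull x _ _ h1, qa_pull x (verts (E ∪ F)) _ subset_rfl, pull_union]
  have h3 : (pull (verts (E ∪ F)) F).card = F.card := by
    conv_rhs => rw [← image_pull _ F h2]
    rw [Finset.card_image_of_injective _ (Subtype.val_injective.prodMap Subtype.val_injective)]
  rw [← h3]
  exact Qv_gain x _ _

lemma qa_eq_Qv {V : Type*} [Fintype V] [DecidableEq V] (x : ℝ) (φ : V → α)
    (hφ : Function.Injective φ) (E : Finset (V × V)) :
    qa x (E.image (Prod.map φ φ)) = Qv x E := by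
  have h : verts (E.image (Prod.map φ φ)) ⊆ Finset.univ.image φ := by
    intro a ha
    simp only [verts, Finset.mem_union, Finset.mem_image] at ha
    rcases ha with ⟨_, ⟨e, _, rfl⟩, rfl⟩ | ⟨_, ⟨e, _, rfl⟩, rfl⟩
    · exact Finset.mem_image_of_mem φ (Finset.mem_univ e.1)
    · exact Finset.mem_image_of_mem φ (Finset.mem_univ e.2)
  rw [qa_pull x _ _ h]
  have hinj : Function.Injective (fun v : V =>
      (⟨φ v, Finset.mem_image_of_mem φ (Finset.mem_univ v)⟩ : {a // a ∈ Finset.univ.image φ})) := by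
    intro a b hab
    exact hφ (congrArg Subtype.val hab)
  rw [← Qv_image x _ hinj]
  congr 1
  have hv : Function.Injective (Prod.map (Subtype.val : {a // a ∈ Finset.univ.image φ} → α)
    (Subtype.val : {a // a ∈ Finset.univ.image φ} → α)) :=
      Subtype.val_injective.prodMap Subtype.val_injective
  apply Finset.image_injective hv
  rw [image_pull _ _ h, Finset.image_image]
  rfl

lemma qa_image (x : ℝ) (φ : α → β) (hφ : Function.Injective φ) (E : Finset (α × α)) :
    qa x (E.image (Prod.map φ φ)) = qa x E := by
  conv_lhs => rw [← image_pull (verts E) E subset_rfl, Finset.image_image, Prod.map_comp_map]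
  exact qa_eq_Qv x _ (hφ.comp Subtype.val_injective) _

end lattice

/-! ### Boxes of the lattice -/

section boxes

variable {d : ℕ}

/-- nearest-neighbour relation -/
def nn (p : (Fin d → ℤ) × (Fin d → ℤ)) : Prop :=
  ∃ i : Fin d, (∀ k, k ≠ i → p.2 k = p.1 k) ∧ p.2 i = p.1 i + 1

open Classical in
/-- bonds inside a vertex set -/
def bonds (W : Finset (Fin d → ℤ)) : Finset ((Fin d → ℤ) × (Fin d → ℤ)) :=
  (W ×ˢ W).filter nn

lemma mem_bonds {W : Finset (Fin d → ℤ)} {e : (Fin d → ℤ) × (Fin d → ℤ)} :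
    e ∈ bonds W ↔ (e.1 ∈ W ∧ e.2 ∈ W) ∧ nn e := by
  simp [bonds]

/-- pressure of a vertex set -/
def fW (x : ℝ) (W : Finset (Fin d → ℤ)) : ℝ := qa x (bonds W)

/-- lower part -/
def lo (i : Fin d) (W : Finset (Fin d → ℤ)) : Finset (Fin d → ℤ) := W.filter fun v => v i < 0

/-- upper part -/
def hi (i : Fin d) (W : Finset (Fin d → ℤ)) : Finset (Fin d → ℤ) := W.filter fun v => ¬ v i < 0

/-- gain from joining the two parts -/
def gain (x : ℝ) (i : Fin d) (W : Finset (Fin d → ℤ)) : ℝ := fW x W - fW x (lo i W) - fW x (hi i W)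

/-- bonds within the two halves -/
def hb (i : Fin d) (W : Finset (Fin d → ℤ)) : Finset ((Fin d → ℤ) × (Fin d → ℤ)) :=
  bonds (lo i W) ∪ bonds (hi i W)

lemma mem_hb {i : Fin d} {W : Finset (Fin d → ℤ)} {e : (Fin d → ℤ) × (Fin d → ℤ)} :
    e ∈ hb i W ↔ e ∈ bonds W ∧ (e.1 i < 0 ↔ e.2 i < 0) := by
  simp only [hb, Finset.mem_union, mem_bonds, lo, hi, Finset.mem_filter]
  tauto

lemma qa_hb (x : ℝ) (i : Fin d) (W : Finset (Fin d → ℤ)) :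
    qa x (hb i W) = fW x (lo i W) + fW x (hi i W) := by
  refine qa_disj x (fun v => v i < 0) _ _ ?_ ?_
  · intro e he
    simp only [mem_bonds, lo, Finset.mem_filter] at he
    exact ⟨he.1.1.2, he.1.2.2⟩
  · intro e he
    simp only [mem_bonds, hi, Finset.mem_filter] at he
    exact ⟨he.1.1.2, he.1.2.2⟩

lemma gain_eq (x : ℝ) (i : Fin d) (W : Finset (Fin d → ℤ)) :
    gain x i W = fW x W - qa x (hb i W) := by
  rw [qa_hb]; unfold gain; ring

lemma qa_biUnion {τ : Type*} [DecidableEq τ] (x : ℝ) (K : Finset τ)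
    (W : τ → Finset (Fin d → ℤ)) (G : τ → Finset ((Fin d → ℤ) × (Fin d → ℤ)))
    (hG : ∀ t ∈ K, ∀ e ∈ G t, e.1 ∈ W t ∧ e.2 ∈ W t)
    (hW : ∀ t ∈ K, ∀ s ∈ K, t ≠ s → Disjoint (W t) (W s)) :
    qa x (K.biUnion G) = ∑ t ∈ K, qa x (G t) := by
  induction K using Finset.induction_on with
  | empty => simp [qa_empty]
  | insert t K ht ih =>
    rw [Finset.biUnion_insert, Finset.sum_insert ht, ← ih
      (fun s hs => hG s (Finset.mem_insert_of_mem hs))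
      (fun s hs r hr => hW s (Finset.mem_insert_of_mem hs) r (Finset.mem_insert_of_mem hr))]
    refine qa_disj x (fun v => v ∈ W t) _ _ (hG t (Finset.mem_insert_self _ _)) ?_
    intro e he
    obtain ⟨s, hs, hes⟩ := Finset.mem_biUnion.1 he
    have hd := hW t (Finset.mem_insert_self _ _) s (Finset.mem_insert_of_mem hs)
      (fun h => ht (h ▸ hs))
    have he2 := hG s (Finset.mem_insert_of_mem hs) e hes
    exact ⟨fun h => Finset.disjoint_left.1 hd h he2.1, fun h => Finset.disjoint_left.1 hd h he2.2⟩

lemma gain_superadd {τ : Type*} [DecidableEq τ] (x : ℝ) (i : Fin d) (K : Finset τ)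
    (W : τ → Finset (Fin d → ℤ)) (U : Finset (Fin d → ℤ)) (hU : ∀ t ∈ K, W t ⊆ U)
    (hW : ∀ t ∈ K, ∀ s ∈ K, t ≠ s → Disjoint (W t) (W s)) :
    ∑ t ∈ K, gain x i (W t) ≤ gain x i U := by
  have h1 := qa_supermod x (K.biUnion fun t => bonds (W t)) (hb i U)
  have h2 : (K.biUnion fun t => bonds (W t)) ∩ hb i U = K.biUnion fun t => hb i (W t) := by
    ext e
    simp only [Finset.mem_inter, Finset.mem_biUnion, mem_hb]
    constructor
    · rintro ⟨⟨t, ht, he⟩, -, h⟩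
      exact ⟨t, ht, he, h⟩
    · rintro ⟨t, ht, he, h⟩
      refine ⟨⟨t, ht, he⟩, ?_, h⟩
      rw [mem_bonds] at he ⊢
      exact ⟨⟨hU t ht he.1.1, hU t ht he.1.2⟩, he.2⟩
  have h3 : (K.biUnion fun t => bonds (W t)) ∪ hb i U ⊆ bonds U := by
    intro e he
    rcases Finset.mem_union.1 he with he | he
    · obtain ⟨t, ht, he⟩ := Finset.mem_biUnion.1 he
      rw [mem_bonds] at he ⊢
      exact ⟨⟨hU t ht he.1.1, hU t ht he.1.2⟩, he.2⟩
    · exact (mem_hb.1 he).1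
  have h4 := qa_mono x h3
  rw [h2, qa_biUnion x K W (fun t => bonds (W t)) (fun t _ e he => (mem_bonds.1 he).1) hW,
    qa_biUnion x K W (fun t => hb i (W t)) (fun t _ e he => (mem_bonds.1 (mem_hb.1 he).1).1) hW] at h1
  simp_rw [gain_eq]
  rw [Finset.sum_sub_distrib]
  unfold fW
  linarith

lemma gain_nonneg (x : ℝ) (i : Fin d) (U : Finset (Fin d → ℤ)) : 0 ≤ gain x i U := by
  simpa using gain_superadd x i (∅ : Finset ℕ) (fun _ => ∅) U (by simp) (by simp)

/-- box with given corners -/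
def box (l u : Fin d → ℤ) : Finset (Fin d → ℤ) := Fintype.piFinset fun k => Finset.Ico (l k) (u k)

lemma mem_box {l u v : Fin d → ℤ} : v ∈ box l u ↔ ∀ k, l k ≤ v k ∧ v k < u k := by
  simp [box]

lemma gain_le (x : ℝ) (i : Fin d) (l u : Fin d → ℤ) :
    gain x i (box l u) ≤ (∏ k ∈ Finset.univ.erase i, ((u k - l k).toNat : ℝ)) * Cg x := by
  classical
  set C := (bonds (box l u)).filter fun e => ¬ (e.1 i < 0 ↔ e.2 i < 0) with hC
  have h1 : bonds (box l u) = hb i (box l u) ∪ C := by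
    ext e
    simp only [Finset.mem_union, mem_hb, hC, Finset.mem_filter]
    tauto
  have h2 := qa_gain x (hb i (box l u)) C
  have hprop : ∀ e ∈ C, e.1 i = -1 ∧ e.2 = Function.update e.1 i 0 := by
    intro e he
    rw [hC, Finset.mem_filter, mem_bonds] at he
    obtain ⟨⟨-, r, hr1, hr2⟩, hcr⟩ := he
    have hri : i = r := by
      by_contra hne
      rw [hr1 i hne] at hcr
      exact hcr Iff.rfl
    subst hri
    have e1 : e.1 i = -1 := by omega
    refine ⟨e1, ?_⟩
    funext k
    by_cases hk : k = i
    · subst hk; simp [hr2, e1]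
    · simp [hk, hr1 k hk]
  have h3 : C.card ≤ ∏ k ∈ Finset.univ.erase i, (u k - l k).toNat := by
    have hcard : (Fintype.piFinset fun k => if k = i then ({-1} : Finset ℤ)
        else Finset.Ico (l k) (u k)).card = ∏ k ∈ Finset.univ.erase i, (u k - l k).toNat := by
      rw [Fintype.card_piFinset, ← Finset.mul_prod_erase _ _ (Finset.mem_univ i)]
      simp only [if_true, Finset.card_singleton, one_mul]
      refine Finset.prod_congr rfl fun k hk => ?_
      rw [if_neg (Finset.ne_of_mem_erase hk), Int.card_Ico]
    rw [← hcard]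
    refine Finset.card_le_card_of_injOn Prod.fst ?_ ?_
    · intro e he
      have hp := hprop e he
      have he' := he
      rw [Finset.mem_coe, hC, Finset.mem_filter, mem_bonds, mem_box] at he'
      rw [Finset.mem_coe, Fintype.mem_piFinset]
      intro k
      by_cases hk : k = i
      · subst hk; simp [hp.1]
      · rw [if_neg hk, Finset.mem_Ico]
        exact he'.1.1.1 k
    · intro e he e' he' hee
      have h := (hprop e he).2
      have h' := (hprop e' he').2
      refine Prod.ext hee ?_
      rw [h, h', hee]
  have h4 : (C.card : ℝ) ≤ ∏ k ∈ Finset.univ.erase i, ((u k - l k).toNat : ℝ) := by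
    exact_mod_cast h3
  rw [gain_eq]
  unfold fW
  have h5 := mul_le_mul_of_nonneg_right h4 (Cg_nonneg x)
  rw [← h1] at h2
  linarith

lemma fW_translate (x : ℝ) (t : Fin d → ℤ) (W : Finset (Fin d → ℤ)) :
    fW x (W.image fun v => v + t) = fW x W := by
  have hinj : Function.Injective (fun v : Fin d → ℤ => v + t) := add_left_injective t
  unfold fW
  rw [← qa_image x _ hinj (bonds W)]
  congr 1
  ext ⟨a, b⟩
  simp only [mem_bonds, Finset.mem_image, Prod.exists, Prod.map_apply, Prod.mk.injEq]
  constructor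
  · rintro ⟨⟨⟨a', ha, rfl⟩, b', hb, rfl⟩, h⟩
    refine ⟨a', b', ⟨⟨ha, hb⟩, ?_⟩, rfl, rfl⟩
    obtain ⟨i, h1, h2⟩ := h
    refine ⟨i, fun k hk => ?_, ?_⟩
    · have := h1 k hk
      simpa using this
    · simp only [Pi.add_apply] at h2 ⊢
      omega
  · rintro ⟨a', b', ⟨⟨ha, hb⟩, i, h1, h2⟩, rfl, rfl⟩
    refine ⟨⟨⟨a', ha, rfl⟩, b', hb, rfl⟩, i, fun k hk => ?_, ?_⟩
    · have := h1 k hk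
      simpa using this
    · simp only [Pi.add_apply] at h2 ⊢
      omega

lemma fW_box (x : ℝ) (l u l' u' : Fin d → ℤ) (h : ∀ k, u k - l k = u' k - l' k) :
    fW x (box l u) = fW x (box l' u') := by
  rw [← fW_translate x (l' - l) (box l u)]
  congr 1
  ext v
  simp only [Finset.mem_image, mem_box]
  constructor
  · rintro ⟨w, hw, rfl⟩ k
    have := hw k
    have := h k
    simp only [Pi.add_apply, Pi.sub_apply]
    omega
  · intro hv
    refine ⟨v - (l' - l), fun k => ?_, by simp⟩
    have := hv k
    have := h k
    simp only [Pi.sub_apply]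
    omega

/-- pressure of a box of given side lengths -/
def pb (x : ℝ) (n : Fin d → ℕ) : ℝ := fW x (box 0 fun k => (n k : ℤ))

/-- gain from doubling direction `i` -/
def gb (x : ℝ) (i : Fin d) (n : Fin d → ℕ) : ℝ := pb x (Function.update n i (2 * n i)) - 2 * pb x n

lemma gain_box (x : ℝ) (i : Fin d) (n : Fin d → ℕ) (l u : Fin d → ℤ) (hl : l i = -n i)
    (hu : u i = n i) (h : ∀ k, k ≠ i → u k - l k = n k) : gain x i (box l u) = gb x i n := by
  have hlo : lo i (box l u) = box l (Function.update u i 0) := by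
    ext v
    simp only [lo, Finset.mem_filter, mem_box]
    constructor
    · rintro ⟨h1, h2⟩ k
      by_cases hk : k = i
      · subst hk; simp [h2, (h1 k).1]
      · simp [hk, h1 k]
    · intro h1
      have hi' := h1 i
      rw [Function.update_self] at hi'
      refine ⟨fun k => ?_, hi'.2⟩
      by_cases hk : k = i
      · subst hk; omega
      · have := h1 k
        rwa [Function.update_of_ne hk] at this
  have hhi : hi i (box l u) = box (Function.update l i 0) u := by
    ext v
    simp only [hi, Finset.mem_filter, mem_box]
    constructor
    · rintro ⟨h1, h2⟩ k
      by_cases hk : k = i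
      · subst hk; simp only [Function.update_self]; have := h1 k; omega
      · simp [hk, h1 k]
    · intro h1
      have hi' := h1 i
      rw [Function.update_self] at hi'
      refine ⟨fun k => ?_, by omega⟩
      by_cases hk : k = i
      · subst hk; omega
      · have := h1 k
        rwa [Function.update_of_ne hk] at this
  unfold gain gb pb
  rw [hlo, hhi]
  rw [fW_box x l u 0 (fun k => ((Function.update n i (2 * n i) k : ℕ) : ℤ)),
    fW_box x l (Function.update u i 0) 0 (fun k => (n k : ℤ)),
    fW_box x (Function.update l i 0) u 0 (fun k => (n k : ℤ))]
  · ring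
  all_goals
    intro k
    by_cases hk : k = i
    · subst hk; simp [hl, hu] <;> ring
    · have := h k hk
      simp [hk, this]

/-- box centred in direction `i` -/
def cbox (i : Fin d) (n : Fin d → ℕ) : Finset (Fin d → ℤ) :=
  box (fun k => if k = i then -(n i : ℤ) else 0) (fun k => (n k : ℤ))

lemma gain_cbox (x : ℝ) (i : Fin d) (n : Fin d → ℕ) : gain x i (cbox i n) = gb x i n :=
  gain_box x i n _ _ (by simp) rfl (fun k hk => by simp [hk])

lemma gb_nonneg (x : ℝ) (i : Fin d) (n : Fin d → ℕ) : 0 ≤ gb x i n := by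
  rw [← gain_cbox]; exact gain_nonneg x i _

lemma gb_le (x : ℝ) (i : Fin d) (n : Fin d → ℕ) :
    gb x i n ≤ (∏ k ∈ Finset.univ.erase i, (n k : ℝ)) * Cg x := by
  rw [← gain_cbox]
  refine (gain_le x i _ _).trans (le_of_eq ?_)
  congr 1
  refine Finset.prod_congr rfl fun k hk => ?_
  rw [if_neg (Finset.ne_of_mem_erase hk)]
  simp

lemma gb_tile (x : ℝ) (i : Fin d) (n m : Fin d → ℕ) (hi : m i ≤ n i) :
    (∏ k ∈ Finset.univ.erase i, ((n k / m k : ℕ) : ℝ)) * gb x i m ≤ gb x i n := by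
  classical
  set K : Finset (Fin d → ℕ) := Fintype.piFinset fun k => if k = i then {0}
    else Finset.range (n k / m k) with hK
  have hcard : K.card = ∏ k ∈ Finset.univ.erase i, (n k / m k) := by
    rw [hK, Fintype.card_piFinset, ← Finset.mul_prod_erase _ _ (Finset.mem_univ i)]
    simp only [if_true, Finset.card_singleton, one_mul]
    refine Finset.prod_congr rfl fun k hk => ?_
    rw [if_neg (Finset.ne_of_mem_erase hk), Finset.card_range]
  set W : (Fin d → ℕ) → Finset (Fin d → ℤ) := fun t =>
    box (fun k => if k = i then -(m i : ℤ) else t k * m k)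
      (fun k => if k = i then (m i : ℤ) else (t k + 1) * m k) with hW
  have hg : ∀ t ∈ K, gain x i (W t) = gb x i m := by
    intro t _
    refine gain_box x i m _ _ (by simp) (by simp) fun k hk => ?_
    simp only [hk, if_false]
    ring
  have hKm : ∀ t ∈ K, ∀ k, k ≠ i → t k < n k / m k := by
    intro t ht k hk
    rw [hK, Fintype.mem_piFinset] at ht
    have := ht k
    rw [if_neg hk, Finset.mem_range] at this
    exact this
  have hKi : ∀ t ∈ K, t i = 0 := by
    intro t ht
    rw [hK, Fintype.mem_piFinset] at ht
    have := ht i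
    rw [if_pos rfl, Finset.mem_singleton] at this
    exact this
  have h := gain_superadd x i K W (cbox i n) ?_ ?_
  · rw [Finset.sum_congr rfl hg, Finset.sum_const, nsmul_eq_mul, hcard, gain_cbox] at h
    exact_mod_cast h
  · intro t ht v hv
    rw [hW, mem_box] at hv
    rw [cbox, mem_box]
    intro k
    have hvk := hv k
    by_cases hk : k = i
    · subst hk
      simp only [if_true] at hvk ⊢
      omega
    · simp only [hk, if_false] at hvk ⊢
      have h1 := hKm t ht k hk
      have h2 : (t k + 1) * m k ≤ n k :=
        (Nat.mul_le_mul_right _ h1).trans (Nat.div_mul_le_self _ _)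
      have h3 : ((t k : ℤ) + 1) * m k ≤ n k := by exact_mod_cast h2
      have h4 : (0 : ℤ) ≤ t k * m k := by positivity
      omega
  · intro t ht s hs hts
    rw [Finset.disjoint_left]
    intro v hv hv'
    apply hts
    funext k
    rw [hW, mem_box] at hv hv'
    have h1 := hv k
    have h2 := hv' k
    by_cases hk : k = i
    · subst hk
      rw [hKi t ht, hKi s hs]
    · simp only [hk, if_false] at h1 h2
      have p1 : (t k : ℤ) * m k < (s k + 1) * m k := by omega
      have p2 : (s k : ℤ) * m k < (t k + 1) * m k := by omega
      have q1 := lt_of_mul_lt_mul_right p1 (by positivity)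
      have q2 := lt_of_mul_lt_mul_right p2 (by positivity)
      omega

end boxes

/-! ### The limit -/

section limit

variable {d : ℕ}

lemma gb_limit (x : ℝ) (i : Fin d) (m : Fin d → ℕ) (hm : ∀ k, 0 < m k) :
    ∃ c : ℝ, Tendsto (fun L : ℕ => gb x i (fun k => m k * L) / (L : ℝ) ^ (d - 1)) atTop (nhds c) := by
  classical
  set A : (Fin d → ℕ) → ℝ := fun n => ∏ k ∈ Finset.univ.erase i, (n k : ℝ) with hA
  have hApos : ∀ n : Fin d → ℕ, (∀ k, 0 < n k) → 0 < A n := fun n hn =>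
    Finset.prod_pos fun k _ => by exact_mod_cast hn k
  set Rs : Set ℝ := {r | ∃ n : Fin d → ℕ, (∀ k, 0 < n k) ∧ r = gb x i n / A n} with hRs
  have hbdd : BddAbove Rs := by
    refine ⟨Cg x, ?_⟩
    rintro r ⟨n, hn, rfl⟩
    rw [div_le_iff₀ (hApos n hn), mul_comm]
    exact gb_le x i n
  have hne : Rs.Nonempty := ⟨_, fun _ => 1, fun _ => one_pos, rfl⟩
  set σ := sSup Rs with hσ
  have hcard : (Finset.univ.erase i).card = d - 1 := by
    rw [Finset.card_erase_of_mem (Finset.mem_univ i), Finset.card_univ, Fintype.card_fin]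
  have hAL : ∀ L : ℕ, A (fun k => m k * L) = A m * (L : ℝ) ^ (d - 1) := by
    intro L
    simp only [hA]
    push_cast
    rw [Finset.prod_mul_distrib, Finset.prod_const, hcard]
  refine ⟨σ * A m, tendsto_order.2 ⟨?_, ?_⟩⟩
  · intro b hb
    have hb' : b / A m < σ := by rwa [div_lt_iff₀ (hApos m hm)]
    obtain ⟨r, ⟨n, hn, rfl⟩, hr⟩ := exists_lt_of_lt_csSup hne hb'
    have hlim : Tendsto (fun L : ℕ => (∏ k ∈ Finset.univ.erase i,
        (((m k * L / n k : ℕ) : ℝ) / (L : ℝ))) * gb x i n) atTop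
        (nhds ((∏ k ∈ Finset.univ.erase i, ((m k : ℝ) / n k)) * gb x i n)) := by
      refine Tendsto.mul_const _ (tendsto_finsetProd _ fun k _ => ?_)
      have h := (tendsto_nat_floor_mul_div_atTop (R := ℝ) (a := (m k : ℝ) / n k)
        (by positivity)).comp tendsto_natCast_atTop_atTop
      refine h.congr fun L => ?_
      simp only [Function.comp]
      congr 2
      rw [← Nat.floor_div_eq_div (K := ℝ)]
      congr 1
      push_cast
      ring
    have hval : (∏ k ∈ Finset.univ.erase i, ((m k : ℝ) / n k)) * gb x i n =
        gb x i n / A n * A m := by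
      rw [Finset.prod_div_distrib]
      simp only [hA]
      ring
    have hlt : b < (∏ k ∈ Finset.univ.erase i, ((m k : ℝ) / n k)) * gb x i n := by
      rw [hval]
      rwa [div_lt_iff₀ (hApos m hm)] at hr
    filter_upwards [hlim.eventually (lt_mem_nhds hlt), eventually_ge_atTop (n i),
      eventually_gt_atTop 0] with L h1 h2 h3
    refine h1.trans_le ?_
    have hL : (0 : ℝ) < (L : ℝ) ^ (d - 1) := by positivity
    rw [Finset.prod_div_distrib, Finset.prod_const, hcard, div_mul_eq_mul_div]
    refine div_le_div_of_nonneg_right ?_ hL.le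
    exact gb_tile x i (fun k => m k * L) n (h2.trans (Nat.le_mul_of_pos_left L (hm i)))
  · intro b hb
    filter_upwards [eventually_gt_atTop 0] with L h3
    refine lt_of_le_of_lt ?_ hb
    have hL : (0 : ℝ) < (L : ℝ) ^ (d - 1) := by positivity
    have hp : ∀ k, 0 < m k * L := fun k => Nat.mul_pos (hm k) h3
    have h1 : gb x i (fun k => m k * L) / A (fun k => m k * L) ≤ σ :=
      le_csSup hbdd ⟨_, hp, rfl⟩
    rw [div_le_iff₀ (hApos _ hp), hAL] at h1
    rw [div_le_iff₀ hL]
    linarith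

lemma stage_limit (x : ℝ) (r : ℕ) (hr : r ≤ d) :
    ∃ c : ℝ, Tendsto (fun L : ℕ =>
      (pb x (fun k : Fin d => (if (k : ℕ) < r then 2 else 1) * L) - 2 ^ r * pb x (fun _ : Fin d => L)) /
        (L : ℝ) ^ (d - 1)) atTop (nhds c) := by
  induction r with
  | zero => exact ⟨0, by simp⟩
  | succ r ih =>
    obtain ⟨c, hc⟩ := ih (by omega)
    obtain ⟨c', hc'⟩ := gb_limit x (⟨r, hr⟩ : Fin d) (fun k => if (k : ℕ) < r then 2 else 1)
      (fun k => by split_ifs <;> norm_num)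
    refine ⟨c' + 2 * c, (hc'.add (hc.const_mul 2)).congr fun L => ?_⟩
    have : (fun k : Fin d => (if (k : ℕ) < r + 1 then 2 else 1) * L) =
        Function.update (fun k : Fin d => (if (k : ℕ) < r then 2 else 1) * L) (⟨r, hr⟩ : Fin d)
          (2 * ((if r < r then 2 else 1) * L)) := by
      funext k
      by_cases hk : k = ⟨r, hr⟩
      · subst hk; simp
      · have hk' : (k : ℕ) ≠ r := fun h => hk (Fin.ext h)
        rw [Function.update_of_ne hk]
        have : (k : ℕ) < r + 1 ↔ (k : ℕ) < r := by omega
        simp only [this]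
    rw [this]
    unfold gb
    simp only
    ring

lemma cube_pressure (x : ℝ) (L : ℕ) :
    EApressure (cubeBonds d L) x = (L : ℝ) ^ d * Real.log 2 + pb x (fun _ : Fin d => L) := by
  have hinj : Function.Injective (fun (v : Fin d → Fin L) (k : Fin d) => ((v k : ℕ) : ℤ)) := by
    intro a b h
    funext k
    have := congrFun h k
    simp only [Nat.cast_inj] at this
    exact Fin.ext this
  rw [EApressure_eq, ← qa_eq_Qv x _ hinj]
  congr 1
  · simp
  · unfold pb fW
    congr 1
    ext ⟨a, b⟩
    simp only [mem_bonds, mem_box, Finset.mem_image, cubeBonds, Finset.mem_filter, Finset.mem_univ,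
      true_and, Prod.exists, Prod.map_apply, Prod.mk.injEq]
    constructor
    · rintro ⟨a', b', ⟨i, h1, h2⟩, rfl, rfl⟩
      refine ⟨⟨fun k => ⟨by simp, by simp⟩, fun k => ⟨by simp, by simp⟩⟩, i, fun k hk => ?_, ?_⟩
      · simp [h1 k hk]
      · simp [h2]
    · rintro ⟨⟨ha, hb⟩, i, h1, h2⟩
      refine ⟨fun k => ⟨(a k).toNat, ?_⟩, fun k => ⟨(b k).toNat, ?_⟩, ⟨i, fun k hk => ?_, ?_⟩, ?_, ?_⟩
      · have := ha k; simp only [Pi.zero_apply] at this; omega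
      · have := hb k; simp only [Pi.zero_apply] at this; omega
      · have := h1 k hk; simp only at this; simp [this]
      · have := ha i; simp only [Pi.zero_apply] at this h2 ⊢; omega
      · funext k; have := ha k; simp only [Pi.zero_apply] at this ⊢; omega
      · funext k; have := hb k; simp only [Pi.zero_apply] at this ⊢; omega

end limit

/-- **Theorem 1.** Existence of the adjacency surface pressure: for `d ≥ 1`
and `x > 0`, with `T_L = P_{Λ_{2L}} − 2^d P_{Λ_L}` (free boundary conditions; the `2^d`
composing sub-cubes of side `L` all have pressure `P_{Λ_L}`), the sequence `T_L / L^{d−1}`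
converges to a finite limit as `L → ∞`. -/
theorem adjacency_surface_pressure_exists
    (d : ℕ) (hd : 1 ≤ d) (x : ℝ) (hx : 0 < x) :
    ∃ c : ℝ, Tendsto (fun L : ℕ =>
        (EApressure (cubeBonds d (2 * L)) x - 2 ^ d * EApressure (cubeBonds d L) x) /
          (L : ℝ) ^ (d - 1))
      atTop (nhds c) := by
  obtain ⟨c, hc⟩ := stage_limit (d := d) x d le_rfl
  refine ⟨c, hc.congr fun L => ?_⟩
  rw [cube_pressure, cube_pressure]
  have : (fun k : Fin d => (if (k : ℕ) < d then 2 else 1) * L) = fun _ : Fin d => 2 * L := by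
    funext k
    simp [k.2]
  rw [this]
  push_cast
  congr 1
  ring

end
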